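/- arXiv:1308.3906 — 2 statements merged into one kernel-verified Lean document; each statement's English description precedes it below -/
import Mathlib

section
/- For every real number r, the integral (1/(2π)) ∫₀^{2π} cos t · exp(i·r·cos t) dt equals i·J₁(r); that is, (1/(2π)) ∫₀^{2π} cos t · exp(i·r·cos t) dt = i · ∑_{m=0}^∞ (−1)^m / (m! (m+1)!) · (r/2)^{2m+1}. -/
/-!
Expand `exp (i r cos t) = ∑ₖ (i r cos t)ᵏ / k!` and integrate term by term, which is justified by
dominated convergence since the `k`-th term is bounded by `|r|ᵏ / k!`. The moments
`∫₀^{2π} cosⁿ t dt` vanish for odd `n` and equal `2π (2m)! / (4ᵐ m!²)` for `n = 2m` (both follow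
from the two-step reduction formula `integral_cos_pow`). Hence only the terms with `k = 2m + 1`
survive, and they are `2π i` times the terms of the series defining `J₁(r)`.
-/

/-- The Bessel function of integer order `n` of the first kind, defined by its
everywhere-convergent power series. -/
noncomputable def besselJ (n : ℕ) (x : ℝ) : ℝ :=
  ∑' m : ℕ, (-1 : ℝ) ^ m / ((Nat.factorial m : ℝ) * (Nat.factorial (m + n) : ℝ)) *
    (x / 2) ^ (2 * m + n)

lemma integral_cos_pow_add_two (n : ℕ) :
    ∫ t in (0 : ℝ)..(2 * Real.pi), Real.cos t ^ (n + 2) =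
      (n + 1) / (n + 2) * ∫ t in (0 : ℝ)..(2 * Real.pi), Real.cos t ^ n := by
  rw [integral_cos_pow]
  simp

lemma integral_cos_pow_odd_period (m : ℕ) :
    ∫ t in (0 : ℝ)..(2 * Real.pi), Real.cos t ^ (2 * m + 1) = 0 := by
  induction m with
  | zero => simp
  | succ m ih =>
    rw [show 2 * (m + 1) + 1 = (2 * m + 1) + 2 by ring, integral_cos_pow_add_two, ih, mul_zero]

lemma integral_cos_pow_even_period (m : ℕ) :
    ∫ t in (0 : ℝ)..(2 * Real.pi), Real.cos t ^ (2 * m) =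
      2 * Real.pi * ((2 * m).factorial / (4 ^ m * (m.factorial : ℝ) ^ 2)) := by
  induction m with
  | zero => simp
  | succ m ih =>
    rw [show 2 * (m + 1) = 2 * m + 2 by ring, integral_cos_pow_add_two, ih]
    have : (m.factorial : ℝ) ≠ 0 := by positivity
    simp only [Nat.factorial_succ, pow_succ]
    push_cast
    field_simp
    ring

/-- Termwise integration of the exponential series. -/
lemma hasSum_integral_cos_mul_exp (r : ℝ) :
    HasSum (fun k : ℕ => (Complex.I * r) ^ k / (k.factorial : ℂ) *
        ((∫ t in (0 : ℝ)..(2 * Real.pi), Real.cos t ^ (k + 1) : ℝ) : ℂ))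
      (∫ t in (0 : ℝ)..(2 * Real.pi),
        ((Real.cos t : ℝ) : ℂ) * Complex.exp (Complex.I * ((r * Real.cos t : ℝ) : ℂ))) := by
  have key : HasSum (fun k : ℕ => ∫ t in (0 : ℝ)..(2 * Real.pi),
      (Complex.I * r) ^ k / (k.factorial : ℂ) * ((Real.cos t ^ (k + 1) : ℝ) : ℂ))
      (∫ t in (0 : ℝ)..(2 * Real.pi),
        ((Real.cos t : ℝ) : ℂ) * Complex.exp (Complex.I * ((r * Real.cos t : ℝ) : ℂ))) := by
    refine intervalIntegral.hasSum_integral_of_dominated_convergence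
      (fun k _ => |r| ^ k / k.factorial) (fun k => ?_) (fun k => ?_) ?_ ?_ ?_
    · exact Continuous.aestronglyMeasurable (by fun_prop)
    · refine Filter.Eventually.of_forall fun t _ => ?_
      rw [norm_mul, norm_div, norm_pow, norm_mul, Complex.norm_I, one_mul, Complex.norm_real,
        Complex.norm_natCast, Complex.norm_real, Real.norm_eq_abs, Real.norm_eq_abs, abs_pow]
      exact mul_le_of_le_one_right (by positivity)
        (pow_le_one₀ (abs_nonneg _) (Real.abs_cos_le_one t))
    · exact Filter.Eventually.of_forall fun t _ => Real.summable_pow_div_factorial |r|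
    · exact intervalIntegrable_const
    · refine Filter.Eventually.of_forall fun t _ => ?_
      have h := (NormedSpace.expSeries_div_hasSum_exp
        (Complex.I * ((r * Real.cos t : ℝ) : ℂ))).mul_left ((Real.cos t : ℝ) : ℂ)
      rw [← Complex.exp_eq_exp_ℂ] at h
      refine h.congr_fun ?_
      intro k
      push_cast
      ring
  simpa only [intervalIntegral.integral_const_mul, intervalIntegral.integral_ofReal] using key

/-- For every real `r`, `(1/(2π)) ∫₀^{2π} cos t · exp(i r cos t) dt = i J₁(r)`. -/
theorem integral_cos_exp_cos_eq_I_mul_besselJ_one (r : ℝ) :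
    ((2 * Real.pi : ℝ) : ℂ)⁻¹ *
        ∫ t in (0 : ℝ)..(2 * Real.pi),
          ((Real.cos t : ℝ) : ℂ) * Complex.exp (Complex.I * ((r * Real.cos t : ℝ) : ℂ)) =
      Complex.I * ((besselJ 1 r : ℝ) : ℂ) := by
  have h := (hasSum_integral_cos_mul_exp r).mul_left ((2 * Real.pi : ℝ) : ℂ)⁻¹
  have hinj : Function.Injective (fun m : ℕ => 2 * m + 1) := fun a b hab => by
    simp only at hab
    omega
  rw [← hinj.hasSum_iff] at h
  · rw [← h.tsum_eq, besselJ, Complex.ofReal_tsum, ← tsum_mul_left]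
    refine tsum_congr fun m => ?_
    simp only [Function.comp_apply]
    rw [show 2 * m + 1 + 1 = 2 * (m + 1) by ring, integral_cos_pow_even_period,
      show 2 * (m + 1) = 2 * m + 1 + 1 by ring, Nat.factorial_succ (2 * m + 1),
      Nat.factorial_succ m, mul_pow Complex.I, pow_succ Complex.I, pow_mul Complex.I,
      Complex.I_sq]
    have h1 : (m.factorial : ℂ) ≠ 0 := by exact_mod_cast m.factorial_ne_zero
    have h2 : ((2 * m + 1).factorial : ℂ) ≠ 0 := by exact_mod_cast (2 * m + 1).factorial_ne_zero
    have h3 : (m + 1 : ℂ) ≠ 0 := by exact_mod_cast m.succ_ne_zero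
    have h4 : (Real.pi : ℂ) ≠ 0 := by exact_mod_cast Real.pi_ne_zero
    have h5 : (4 : ℂ) ^ m = 2 ^ (2 * m) := by rw [pow_mul]; norm_num
    push_cast
    rw [pow_succ 4 m, h5, div_pow, pow_succ 2 (2 * m)]
    field_simp
    ring
  · intro k hk
    rcases Nat.even_or_odd' k with ⟨m, rfl | rfl⟩
    · rw [integral_cos_pow_odd_period]
      simp
    · exact absurd ⟨m, rfl⟩ hk
end

section
/- Fix k ∈ ℝ and x = (x₁, x₂) ∈ ℝ², and for each N ∈ ℕ let θ_n^N = (cos(2πn/N), sin(2πn/N)) for n = 1, …, N be N equally spaced unit directions. Then lim_{N→∞} (1/N) ∑_{n=1}^{N} exp(i·k·(θ_n^N · x)) = J₀(k·‖x‖), where θ·x denotes the Euclidean inner product and ‖x‖ the Euclidean norm. -/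
/-!
Write `k (θ · x) = z w + z̄ w⁻¹` with `z = k (x₀ - i x₁) / 2` and `w = exp (2πi n / N)`. Expanding
both factors of `exp (i z w) * exp (i z̄ w⁻¹)` in power series gives an absolutely convergent double
series in `(a, b)` with coefficients `(i z)^a (i z̄)^b / (a! b!)` and angular part `w^a w⁻ᵇ`.
Averaging over `n` replaces the angular part by the average of `w^(a-b)` over the `N`-th roots of
unity, which has modulus at most one and, as soon as `N > max a b`, equals `1` if `a = b` and `0`
otherwise (`tendsto_rootAverage`). Dominated convergence for series lets `N → ∞` term by
term, and the surviving diagonal `∑ (-|z|²)^a / (a!)²` is the power series of `J₀(2 |z|)`.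
-/

open Filter

/-- The average over the `N`-th roots of unity `w` of `w ^ a * w⁻¹ ^ b`, where `p = (a, b)`. -/
noncomputable def rootAverage (N : ℕ) (p : ℕ × ℕ) : ℂ :=
  (N : ℂ)⁻¹ * ∑ n ∈ Finset.Icc 1 N,
    ((Complex.exp (2 * Real.pi * Complex.I / N) ^ n) ^ p.1 *
      ((Complex.exp (2 * Real.pi * Complex.I / N) ^ n)⁻¹) ^ p.2)

lemma norm_exp_two_pi_div (N : ℕ) : ‖Complex.exp (2 * Real.pi * Complex.I / N)‖ = 1 := by
  have : (2 * Real.pi * Complex.I / N : ℂ) = ((2 * Real.pi / N : ℝ) : ℂ) * Complex.I := by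
    push_cast; ring
  rw [this, Complex.norm_exp_ofReal_mul_I]

lemma norm_rootAverage_le_one (N : ℕ) (p : ℕ × ℕ) : ‖rootAverage N p‖ ≤ 1 := by
  unfold rootAverage
  rw [norm_mul, norm_inv, Complex.norm_natCast]
  have h : ‖∑ n ∈ Finset.Icc 1 N, ((Complex.exp (2 * Real.pi * Complex.I / N) ^ n) ^ p.1 *
      ((Complex.exp (2 * Real.pi * Complex.I / N) ^ n)⁻¹) ^ p.2)‖ ≤ N := by
    refine (norm_sum_le _ _).trans ?_
    simp [norm_exp_two_pi_div]
  calc (N : ℝ)⁻¹ * _ ≤ (N : ℝ)⁻¹ * N := by gcongr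
    _ ≤ 1 := inv_mul_le_one

/-- Orthogonality of characters: the average is eventually equal to its limit, because a nonzero
`a - b` is not divisible by `N` once `N > max a b`. -/
lemma tendsto_rootAverage (p : ℕ × ℕ) :
    Tendsto (fun N => rootAverage N p) atTop (nhds (if p.1 = p.2 then 1 else 0)) := by
  refine tendsto_const_nhds.congr' ?_
  filter_upwards [eventually_gt_atTop (max p.1 p.2)] with N hN
  have hN0 : N ≠ 0 := by omega
  have hN0' : (N : ℂ) ≠ 0 := by exact_mod_cast hN0
  have hprim := Complex.isPrimitiveRoot_exp N hN0
  unfold rootAverage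
  set ω := Complex.exp (2 * Real.pi * Complex.I / N) with hω
  have hω0 : ω ≠ 0 := Complex.exp_ne_zero _
  have hterm : ∀ n : ℕ, (ω ^ n) ^ p.1 * ((ω ^ n)⁻¹) ^ p.2 = (ω ^ p.1 * (ω⁻¹) ^ p.2) ^ n := by
    intro n
    rw [mul_pow, ← inv_pow, ← pow_mul, ← pow_mul, ← pow_mul, ← pow_mul, mul_comm n, mul_comm n]
  simp only [hterm]
  split_ifs with h
  · simp [h, hω0, hN0']
  · set ζ := ω ^ p.1 * (ω⁻¹) ^ p.2 with hζ
    have hζ1 : ζ ≠ 1 := by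
      intro h1
      rw [hζ, inv_pow, ← div_eq_mul_inv, div_eq_one_iff_eq (pow_ne_zero _ hω0)] at h1
      exact h (hprim.pow_inj (by omega) (by omega) h1)
    have hζN : ζ ^ N = 1 := by
      rw [← hterm, hprim.pow_eq_one]; simp
    have hsum : ∑ n ∈ Finset.Icc 1 N, ζ ^ n = 0 := by
      rw [← Finset.Ico_succ_right_eq_Icc, Finset.sum_Ico_eq_sum_range]
      simp only [pow_add, ← Finset.mul_sum]
      simp [geom_sum_eq hζ1, hζN]
    rw [hsum, mul_zero]

lemma summable_exp_coeff (u : ℂ) : Summable fun a : ℕ => ‖u ^ a / (a.factorial : ℂ)‖ :=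
  NormedSpace.norm_expSeries_div_summable u

lemma hasSum_exp_mul_exp (u v : ℂ) :
    HasSum (fun p : ℕ × ℕ => u ^ p.1 / (p.1.factorial : ℂ) * (v ^ p.2 / (p.2.factorial : ℂ)))
      (Complex.exp u * Complex.exp v) := by
  have h (w : ℂ) : HasSum (fun a : ℕ => w ^ a / (a.factorial : ℂ)) (Complex.exp w) := by
    rw [Complex.exp_eq_exp_ℂ]
    exact NormedSpace.expSeries_div_hasSum_exp w
  have hs := summable_mul_of_summable_norm (f := fun a : ℕ => u ^ a / (a.factorial : ℂ))
    (g := fun a : ℕ => v ^ a / (a.factorial : ℂ)) (summable_exp_coeff u) (summable_exp_coeff v)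
  exact HasSum.mul (f := fun a : ℕ => u ^ a / (a.factorial : ℂ))
    (g := fun a : ℕ => v ^ a / (a.factorial : ℂ)) (h u) (h v) hs

/-- The generating-function form of the limit, for arbitrary complex amplitudes `u`, `v`. -/
lemma tendsto_average_exp (u v : ℂ) :
    Tendsto (fun N : ℕ => (N : ℂ)⁻¹ * ∑ n ∈ Finset.Icc 1 N,
        (Complex.exp (u * Complex.exp (2 * Real.pi * Complex.I / N) ^ n) *
          Complex.exp (v * (Complex.exp (2 * Real.pi * Complex.I / N) ^ n)⁻¹)))
      atTop (nhds (∑' a : ℕ, (u * v) ^ a / ((a.factorial : ℂ) * (a.factorial : ℂ)))) := by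
  set c : ℕ × ℕ → ℂ := fun p =>
    u ^ p.1 / (p.1.factorial : ℂ) * (v ^ p.2 / (p.2.factorial : ℂ)) with hc
  have hsumm : Summable fun p => ‖c p‖ :=
    Summable.mul_norm (f := fun a : ℕ => u ^ a / (a.factorial : ℂ))
      (g := fun a : ℕ => v ^ a / (a.factorial : ℂ)) (summable_exp_coeff u) (summable_exp_coeff v)
  have hlim : Tendsto (fun N : ℕ => ∑' p, c p * rootAverage N p) atTop
      (nhds (∑' p : ℕ × ℕ, c p * (if p.1 = p.2 then 1 else 0))) := by
    refine tendsto_tsum_of_dominated_convergence hsumm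
      (fun p => (tendsto_rootAverage p).const_mul _) (Eventually.of_forall fun N p => ?_)
    rw [norm_mul]
    exact mul_le_of_le_one_right (norm_nonneg _) (norm_rootAverage_le_one N p)
  have hdiag : ∑' p : ℕ × ℕ, c p * (if p.1 = p.2 then 1 else 0)
      = ∑' a : ℕ, (u * v) ^ a / ((a.factorial : ℂ) * (a.factorial : ℂ)) := by
    have hinj : Function.Injective (fun a : ℕ => (a, a)) := fun a b h => (Prod.ext_iff.1 h).1
    rw [← hinj.tsum_eq]
    · refine tsum_congr fun a => ?_
      simp only [hc, if_true]
      rw [mul_one, mul_pow, div_mul_div_comm]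
    · rintro ⟨a, b⟩ h
      have hab : a = b := by
        by_contra hne
        exact h (by simp [hne])
      exact ⟨a, by simp [hab]⟩
  rw [hdiag] at hlim
  refine hlim.congr fun N => ?_
  have hs := (hasSum_sum (s := Finset.Icc 1 N) fun n _ => hasSum_exp_mul_exp
    (u * Complex.exp (2 * Real.pi * Complex.I / N) ^ n)
    (v * (Complex.exp (2 * Real.pi * Complex.I / N) ^ n)⁻¹)).mul_left (N : ℂ)⁻¹
  rw [← hs.tsum_eq]
  refine tsum_congr fun p => ?_
  simp only [rootAverage, hc]
  rw [mul_left_comm, Finset.mul_sum]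
  congr 1
  refine Finset.sum_congr rfl fun n _ => ?_
  rw [mul_pow u, mul_pow v]
  ring

/-- For fixed `k ∈ ℝ` and `x ∈ ℝ²`, with equally spaced unit directions
`θₙᴺ = (cos(2πn/N), sin(2πn/N))`, `n = 1, …, N`, one has
`lim_{N→∞} (1/N) ∑_{n=1}^{N} exp(i k (θₙᴺ · x)) = J₀(k ‖x‖)`. -/
theorem tendsto_average_plane_waves_eq_besselJ_zero
    (k : ℝ) (x : EuclideanSpace ℝ (Fin 2)) :
    Tendsto (fun N : ℕ => (N : ℂ)⁻¹ * ∑ n ∈ Finset.Icc 1 N,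
        Complex.exp (Complex.I *
          ((k * (Real.cos (2 * Real.pi * n / N) * x 0 +
                 Real.sin (2 * Real.pi * n / N) * x 1) : ℝ) : ℂ)))
      atTop (nhds ((besselJ 0 (k * ‖x‖) : ℝ) : ℂ)) := by
  set u : ℂ := Complex.I * (k * (x 0 - Complex.I * x 1) / 2) with hu
  set v : ℂ := Complex.I * (k * (x 0 + Complex.I * x 1) / 2) with hv
  have huv : u * v = -(((k * ‖x‖ / 2) ^ 2 : ℝ) : ℂ) := by
    have hnorm : ‖x‖ ^ 2 = x 0 ^ 2 + x 1 ^ 2 := by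
      rw [EuclideanSpace.real_norm_sq_eq, Fin.sum_univ_two]
    rw [div_pow, mul_pow, hnorm, hu, hv]
    push_cast
    linear_combination
      (k ^ 2 / 4 * (x 0 ^ 2 - (Complex.I ^ 2 - 1) * x 1 ^ 2) : ℂ) * Complex.I_sq
  have hlimit : ((besselJ 0 (k * ‖x‖) : ℝ) : ℂ)
      = ∑' a : ℕ, (u * v) ^ a / ((a.factorial : ℂ) * (a.factorial : ℂ)) := by
    rw [besselJ, Complex.ofReal_tsum]
    refine tsum_congr fun a => ?_
    rw [huv, neg_pow (((k * ‖x‖ / 2) ^ 2 : ℝ) : ℂ), add_zero, add_zero, pow_mul]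
    push_cast
    ring
  rw [hlimit]
  refine (tendsto_average_exp u v).congr fun N => ?_
  congr 1
  refine Finset.sum_congr rfl fun n _ => ?_
  rw [← Complex.exp_add]
  congr 1
  have hexp : Complex.exp (2 * Real.pi * Complex.I / N) ^ n
      = Complex.exp (((2 * Real.pi * n / N : ℝ) : ℂ) * Complex.I) := by
    rw [← Complex.exp_nat_mul]
    congr 1
    push_cast
    ring
  rw [hexp, ← Complex.exp_neg, ← neg_mul, Complex.exp_mul_I, Complex.exp_mul_I, Complex.cos_neg,
    Complex.sin_neg, Complex.ofReal_mul, Complex.ofReal_add, Complex.ofReal_mul,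
    Complex.ofReal_mul, Complex.ofReal_cos, Complex.ofReal_sin, hu, hv]
  linear_combination (-(Complex.I * k * x 1 *
    Complex.sin ((2 * Real.pi * n / N : ℝ) : ℂ)) : ℂ) * Complex.I_sq
end
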